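/- Let X be a complex Banach space whose algebraic dimension (as a ℂ-vector space) equals the cardinality of the continuum 𝔠 = 2^ℵ₀, and let T be a bounded linear operator on X. Then T is algebraically similar to the Volterra operator V acting on C[0,1] if and only if T is injective, quasinilpotent, and satisfies the closed finite descent condition: there exists m ∈ ℕ such that the closure of T^m(X) equals the closure of T^{m+1}(X). -/

import Mathlib

open MeasureTheory Set

/-- The Volterra operator on `C[0,1]` (complex-valued): `(V f)(x) = ∫_0^x f(t) dt`. -/
noncomputable def volterra : C(Set.Icc (0:ℝ) 1, ℂ) →ₗ[ℂ] C(Set.Icc (0:ℝ) 1, ℂ) where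
  toFun f :=
    ⟨fun x => ∫ t in (0:ℝ)..(x : ℝ), f (Set.projIcc 0 1 zero_le_one t),
      (intervalIntegral.continuous_primitive
        (fun a b => (f.continuous.comp continuous_projIcc).intervalIntegrable a b) 0).comp
        continuous_subtype_val⟩
  map_add' f g := by
    ext x
    simp only [ContinuousMap.coe_mk, ContinuousMap.add_apply]
    exact intervalIntegral.integral_add
      ((f.continuous.comp continuous_projIcc).intervalIntegrable _ _)
      ((g.continuous.comp continuous_projIcc).intervalIntegrable _ _)
  map_smul' c f := by
    ext x
    simp only [ContinuousMap.coe_mk, ContinuousMap.smul_apply, RingHom.id_apply]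
    exact intervalIntegral.integral_smul c _

/-- A linear operator on a complex vector space is quasinilpotent if its spectrum is
contained in `{0}`, i.e. `T - z • id` is bijective for every nonzero `z`. -/
def IsQuasinilpotentOp {X : Type*} [AddCommGroup X] [Module ℂ X] (T : X →ₗ[ℂ] X) : Prop :=
  ∀ z : ℂ, z ≠ 0 → Function.Bijective fun x => T x - z • x

/-! Let `T` be injective and quasinilpotent on `X`. Every polynomial prime to `t` acts bijectively
through `T`, so `X` is a torsion-free module over the local ring `ℂ[t]_(t)`. Its largest divisible
submodule `D = ⋂ Tⁿ X` is a vector space over `ℂ(t)`, hence a direct summand, and a linear left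
inverse of `T` embeds `X / D` into the space of sequences in `X / TX`, with `T` acting as the right
shift. If every sequence occurs (the Borel property), then `(X, T)` is determined up to similarity
by the ranks of `D` and of `X / TX`. A Mittag-Leffler argument shows that for bounded operators on
Banach spaces the Borel property amounts to closed finite descent.

Both ranks are equal to `𝔠`. For `X / TX`, a gliding hump along an almost disjoint family of `𝔠`
subsets of `ℕ` applies, because `T` is not bounded below. For `D`, the entire functions of `T` map a
nonzero element of `D` into `D`, and the exponentials `exp (α t)` are linearly independent over
`ℂ(t)`. -/

section Hyperrange

variable {R M : Type*} [CommRing R] [AddCommGroup M] [Module R M]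

/-- The hyperrange `⋂ₙ ran fⁿ` of an endomorphism. For multiplication by a scalar `r` it is the
`r`-divisible part of the module. -/
def hyperrange (f : Module.End R M) : Submodule R M :=
  ⨅ n : ℕ, LinearMap.range (f ^ n)

variable {f : Module.End R M} {x : M}

lemma mem_hyperrange : x ∈ hyperrange f ↔ ∀ n : ℕ, ∃ y, (f ^ n) y = x := by
  simp only [hyperrange, Submodule.mem_iInf, LinearMap.mem_range]

lemma exists_mem_hyperrange_apply_eq (hf : Function.Injective f) (hx : x ∈ hyperrange f) :
    ∃ y ∈ hyperrange f, f y = x := by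
  obtain ⟨y, hy⟩ := mem_hyperrange.1 hx 1
  refine ⟨y, mem_hyperrange.2 fun n => ?_, by simpa only [pow_one] using hy⟩
  obtain ⟨z, hz⟩ := mem_hyperrange.1 hx (n + 1)
  refine ⟨z, hf ?_⟩
  rw [← Module.End.mul_apply, ← pow_succ', hz, ← hy, pow_one]

lemma bijective_smul_hyperrange {q : R} (hq : Function.Bijective fun a : M => q • a) :
    Function.Bijective fun a : hyperrange f => q • a := by
  refine ⟨fun a b h => Subtype.ext (hq.1 (congrArg Subtype.val h)), fun ⟨x, hx⟩ => ?_⟩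
  obtain ⟨y, rfl⟩ := hq.2 x
  refine ⟨⟨y, mem_hyperrange.2 fun n => ?_⟩, rfl⟩
  obtain ⟨z, hz⟩ := mem_hyperrange.1 hx n
  obtain ⟨w, rfl⟩ := hq.2 z
  exact ⟨w, hq.1 (by simpa only [map_smul] using hz)⟩

lemma bijective_smul_hyperrange_algebraMap_self {r : R}
    (hr : Function.Injective fun a : M => r • a) :
    Function.Bijective fun a : hyperrange (algebraMap R (Module.End R M) r) => r • a := by
  refine ⟨fun a b h => Subtype.ext (hr (congrArg Subtype.val h)), fun ⟨x, hx⟩ => ?_⟩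
  obtain ⟨y, hy, hyx⟩ := exists_mem_hyperrange_apply_eq hr hx
  exact ⟨⟨y, hy⟩, Subtype.ext hyx⟩

lemma bijective_smul_hyperrange_of_irreducible [WfDvdMonoid R] {r : R}
    (hr : Irreducible r) (hinj : Function.Injective fun a : M => r • a)
    (hbij : ∀ q : R, ¬ r ∣ q → Function.Bijective fun a : M => q • a) {p : R} (hp : p ≠ 0) :
    Function.Bijective fun a : hyperrange (algebraMap R (Module.End R M) r) => p • a := by
  obtain ⟨n, q, hq, rfl⟩ := WfDvdMonoid.max_power_factor hp hr
  have hpow := (bijective_smul_hyperrange_algebraMap_self hinj).iterate n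
  simp only [smul_iterate] at hpow
  simpa only [mul_smul] using! hpow.comp (bijective_smul_hyperrange (hbij q hq))

end Hyperrange

section DivisibleModules

universe v w

variable {R : Type*} {M : Type v} {N : Type w} [CommRing R] [AddCommGroup M] [Module R M]
  [AddCommGroup N] [Module R N]

lemma baer_of_surjective_smul [IsPrincipalIdealRing R]
    (h : ∀ p : R, p ≠ 0 → Function.Surjective fun a : M => p • a) : Module.Baer R M := by
  intro I g
  obtain ⟨a, rfl⟩ := (IsPrincipalIdealRing.principal I).principal
  rcases eq_or_ne a 0 with rfl | ha
  · refine ⟨0, fun x hx => ?_⟩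
    obtain rfl : x = 0 := by simpa only [Submodule.span_zero_singleton, Submodule.mem_bot] using hx
    exact (map_zero g).symm
  · obtain ⟨d, hd⟩ := h a ha (g ⟨a, Submodule.mem_span_singleton_self a⟩)
    refine ⟨LinearMap.toSpanSingleton R M d, fun x hx => ?_⟩
    obtain ⟨b, rfl⟩ := Submodule.mem_span_singleton.1 hx
    rw [LinearMap.toSpanSingleton_apply, smul_assoc]
    exact (congrArg (b • ·) hd).trans (map_smul g b _).symm

variable [IsDomain R]

lemma isLocalizedModule_id_of_bijective_smul
    (hM : ∀ p : R, p ≠ 0 → Function.Bijective fun a : M => p • a) :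
    IsLocalizedModule (nonZeroDivisors R) (LinearMap.id : M →ₗ[R] M) where
  map_units p := (Module.End.isUnit_iff _).2 (hM p (nonZeroDivisors.coe_ne_zero p))
  surj y := ⟨(y, 1), one_smul _ _⟩
  exists_of_eq h := ⟨1, congrArg _ h⟩

/-- Such modules are vector spaces over the fraction field, of the same dimension. -/
lemma nonempty_linearEquiv_of_bijective_smul
    (hM : ∀ p : R, p ≠ 0 → Function.Bijective fun a : M => p • a)
    (hN : ∀ p : R, p ≠ 0 → Function.Bijective fun a : N => p • a)
    (hrank : Cardinal.lift.{w} (Module.rank R M) = Cardinal.lift.{v} (Module.rank R N)) :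
    Nonempty (M ≃ₗ[R] N) := by
  let S := nonZeroDivisors R
  have := isLocalizedModule_id_of_bijective_smul hM
  have := isLocalizedModule_id_of_bijective_smul hN
  let K := FractionRing R
  let : Module K M := IsLocalizedModule.module S LinearMap.id
  let : Module K N := IsLocalizedModule.module S LinearMap.id
  have : IsScalarTower R K M := IsLocalizedModule.isScalarTower_module S LinearMap.id
  have : IsScalarTower R K N := IsLocalizedModule.isScalarTower_module S LinearMap.id
  obtain ⟨e⟩ := nonempty_linearEquiv_of_lift_rank_eq (R := K) (M := M) (M' := N) (by
    rwa [IsLocalization.rank_eq (R := R) K S le_rfl, IsLocalization.rank_eq (R := R) K S le_rfl])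
  exact ⟨e.restrictScalars R⟩

end DivisibleModules

section BorelProperty

variable {R V W : Type*} [CommRing R] [AddCommGroup V] [Module R V] [AddCommGroup W] [Module R W]

/-- The Borel property, after Borel's theorem on Taylor coefficients: every formal series
`∑ Tᵏ sₖ` is the asymptotic expansion of some vector. -/
def HasBorelProperty (T : Module.End R V) : Prop :=
  ∀ s : ℕ → V, ∃ x : V, ∀ n : ℕ, ∃ y : V, x = ∑ k ∈ Finset.range n, (T ^ k) (s k) + (T ^ n) y

lemma HasBorelProperty.of_semiconj {T : Module.End R V} {S : Module.End R W}
    (hS : HasBorelProperty S) (G : V ≃ₗ[R] W) (hG : Function.Semiconj G T S) :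
    HasBorelProperty T := by
  have hpow (n : ℕ) (x : V) : G ((T ^ n) x) = (S ^ n) (G x) := by
    simpa only [Module.End.coe_pow] using hG.iterate_right n x
  intro s
  obtain ⟨x, hx⟩ := hS fun k => G (s k)
  refine ⟨G.symm x, fun n => ?_⟩
  obtain ⟨y, rfl⟩ := hx n
  refine ⟨G.symm y, G.injective ?_⟩
  simp only [map_add, map_sum, hpow, LinearEquiv.apply_symm_apply]

/-- The right shift on sequences. -/
def rightShift (R V : Type*) [CommRing R] [AddCommGroup V] [Module R V] :
    Module.End R (ℕ → V) where
  toFun v n := Nat.casesOn n 0 v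
  map_add' v w := by
    funext n
    cases n <;> simp
  map_smul' c v := by
    funext n
    cases n <;> simp

/-- The coefficients of the asymptotic expansion in powers of `T`: if `Λ` is a left inverse of `T`,
then `x = ∑ₖ₌₀ⁿ⁻¹ Tᵏ (Λᵏ x - T Λᵏ⁺¹ x) + Tⁿ Λⁿ x`. -/
def coefficientMap (T Λ : Module.End R V) : V →ₗ[R] ℕ → V ⧸ LinearMap.range T :=
  LinearMap.pi fun n => (LinearMap.range T).mkQ ∘ₗ Λ ^ n

variable {T Λ : Module.End R V}

lemma coefficientMap_eq_zero_iff_mem_range {x : V} {n : ℕ} :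
    coefficientMap T Λ x n = 0 ↔ (Λ ^ n) x ∈ LinearMap.range T :=
  Submodule.Quotient.mk_eq_zero _

lemma semiconj_coefficientMap (h : Λ * T = 1) :
    Function.Semiconj (coefficientMap T Λ) T (rightShift R _) := by
  intro x
  funext n
  cases n with
  | zero => exact coefficientMap_eq_zero_iff_mem_range.2 (LinearMap.mem_range_self T x)
  | succ n =>
    change Submodule.Quotient.mk ((Λ ^ (n + 1) * T) x) = Submodule.Quotient.mk ((Λ ^ n) x)
    rw [pow_succ, mul_assoc, h, mul_one]

lemma pow_apply_pow_apply_of_coefficientMap_eq_zero (h : Λ * T = 1) {x : V}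
    (hx : coefficientMap T Λ x = 0) (n : ℕ) : (T ^ n) ((Λ ^ n) x) = x := by
  induction n with
  | zero => rfl
  | succ n ih =>
    obtain ⟨w, hw⟩ := coefficientMap_eq_zero_iff_mem_range.1 (congrFun hx n)
    rw [pow_succ T, pow_succ' Λ, Module.End.mul_apply, Module.End.mul_apply, ← hw,
      ← Module.End.mul_apply Λ, h, Module.End.one_apply, hw, ih]

lemma ker_coefficientMap (h : Λ * T = 1) :
    LinearMap.ker (coefficientMap T Λ) = hyperrange T := by
  ext x
  rw [LinearMap.mem_ker, mem_hyperrange]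
  refine ⟨fun hx n => ⟨_, pow_apply_pow_apply_of_coefficientMap_eq_zero h hx n⟩,
    fun hx => funext fun n => coefficientMap_eq_zero_iff_mem_range.2 ?_⟩
  obtain ⟨y, rfl⟩ := hx (n + 1)
  refine ⟨y, ?_⟩
  rw [← Module.End.mul_apply, pow_succ, ← mul_assoc, pow_mul_pow_eq_one n h, one_mul]

lemma coefficientMap_surjective (h : Λ * T = 1) (hT : HasBorelProperty T) :
    Function.Surjective (coefficientMap T Λ) := by
  intro v
  choose w hw using fun k => (LinearMap.range T).mkQ_surjective (v k)
  let s (k : ℕ) : V := w k - T (Λ (w k))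
  have hΛs (k : ℕ) : Λ (s k) = 0 := by
    rw [map_sub, ← Module.End.mul_apply Λ, h, Module.End.one_apply, sub_self]
  obtain ⟨x, hx⟩ := hT s
  refine ⟨x, funext fun j => ?_⟩
  obtain ⟨y, hy⟩ := hx (j + 1)
  have hterm (k : ℕ) (hk : k ∈ Finset.range j) : (Λ ^ j) ((T ^ k) (s k)) = 0 := by
    obtain ⟨i, rfl⟩ := Nat.exists_eq_add_of_lt (Finset.mem_range.1 hk)
    rw [show k + i + 1 = (i + 1) + k by ring, pow_add, ← Module.End.mul_apply, mul_assoc,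
      pow_mul_pow_eq_one k h, mul_one, pow_succ, Module.End.mul_apply, hΛs, map_zero]
  have hxj : (Λ ^ j) x = s j + T y := by
    rw [hy, Finset.sum_range_succ, map_add, map_add, map_sum, Finset.sum_eq_zero hterm, zero_add,
      pow_succ T, ← Module.End.mul_apply, ← Module.End.mul_apply (Λ ^ j), ← mul_assoc,
      pow_mul_pow_eq_one j h, Module.End.one_apply, one_mul]
  rw [← hw j]
  refine (Submodule.Quotient.eq _).2 ⟨y - Λ (w j), ?_⟩
  simp only [hxj, map_sub, s]
  abel

end BorelProperty

section Classification

open Polynomial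
open Module (AEval')

universe v w

variable {K : Type*} [Field K] {V : Type v} {W : Type w} [AddCommGroup V] [Module K V]
  [AddCommGroup W] [Module K W]

/-- The hyperrange of `T`, as a submodule of the `K[X]`-module on which `X` acts as `T`. -/
noncomputable abbrev divisiblePart (T : Module.End K V) : Submodule K[X] (AEval' T) :=
  hyperrange (algebraMap K[X] (Module.End K[X] (AEval' T)) X)

variable {T : Module.End K V} {S : Module.End K W}

/-- A linear map intertwining `T` and `S`, as a map of `K[X]`-modules. -/
noncomputable def aevalMap (f : V →ₗ[K] W) (hf : Function.Semiconj f T S) :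
    AEval' T →ₗ[K[X]] AEval' S :=
  LinearMap.ofAEval T ((AEval'.of S).toLinearMap ∘ₗ f) fun x =>
    (congrArg (AEval'.of S) (hf x)).trans (Module.AEval.X_smul_of S (f x)).symm

lemma aevalMap_of (f : V →ₗ[K] W) (hf : Function.Semiconj f T S) (x : V) :
    aevalMap f hf (AEval'.of T x) = AEval'.of S (f x) := rfl

lemma of_mem_divisiblePart {x : V} : AEval'.of T x ∈ divisiblePart T ↔ x ∈ hyperrange T := by
  simp only [mem_hyperrange, ← map_pow, Module.algebraMap_end_apply]
  refine forall_congr' fun n => ((AEval'.of T).surjective.exists.trans ?_)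
  simp only [AEval'.of, Module.AEval.X_pow_smul_of, EmbeddingLike.apply_eq_iff_eq,
    Module.End.smul_def]

lemma injective_X_smul_aeval (hT : Function.Injective T) :
    Function.Injective fun a : AEval' T => (X : K[X]) • a := fun a b h => by
  simpa only [Module.AEval.of_symm_X_smul, Module.End.smul_def, hT.eq_iff,
    EmbeddingLike.apply_eq_iff_eq] using congrArg (AEval'.of T).symm h

lemma bijective_smul_divisiblePart (hT : Function.Injective T)
    (hq : ∀ q : K[X], ¬ X ∣ q → Function.Bijective (aeval T q)) {p : K[X]} (hp : p ≠ 0) :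
    Function.Bijective fun d : divisiblePart T => p • d :=
  bijective_smul_hyperrange_of_irreducible irreducible_X (injective_X_smul_aeval hT) hq hp

lemma exists_aeval_linearMap_ker_eq_divisiblePart (hT : Function.Injective T)
    (hB : HasBorelProperty T) :
    ∃ π : AEval' T →ₗ[K[X]] AEval' (rightShift K (V ⧸ LinearMap.range T)),
      Function.Surjective π ∧ LinearMap.ker π = divisiblePart T := by
  obtain ⟨Λ, hΛ⟩ : ∃ Λ : Module.End K V, Λ * T = 1 :=
    LinearMap.exists_leftInverse_of_injective T (LinearMap.ker_eq_bot.2 hT)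
  refine ⟨aevalMap (coefficientMap T Λ) (semiconj_coefficientMap hΛ), fun v => ?_, ?_⟩
  · obtain ⟨v, rfl⟩ := (AEval'.of _).surjective v
    obtain ⟨x, rfl⟩ := coefficientMap_surjective hΛ hB v
    exact ⟨AEval'.of T x, aevalMap_of _ _ x⟩
  · ext a
    obtain ⟨x, rfl⟩ := (AEval'.of T).surjective a
    rw [of_mem_divisiblePart, ← ker_coefficientMap hΛ, LinearMap.mem_ker, LinearMap.mem_ker,
      aevalMap_of, map_eq_zero_iff _ (AEval'.of _).injective]

lemma nonempty_aeval_linearEquiv_prod (hT : Function.Injective T)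
    (hq : ∀ q : K[X], ¬ X ∣ q → Function.Bijective (aeval T q)) (hB : HasBorelProperty T) :
    Nonempty (AEval' T ≃ₗ[K[X]]
      divisiblePart T × AEval' (rightShift K (V ⧸ LinearMap.range T))) := by
  obtain ⟨π, hπ, hker⟩ := exists_aeval_linearMap_ker_eq_divisiblePart hT hB
  have hBaer : Module.Baer K[X] (divisiblePart T) :=
    baer_of_surjective_smul fun p hp => (bijective_smul_divisiblePart hT hq hp).2
  obtain ⟨ρ, hρ⟩ := hBaer.extension_property (divisiblePart T).subtype
    (Submodule.injective_subtype _) LinearMap.id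
  replace hρ (d : divisiblePart T) : ρ d = d := LinearMap.congr_fun hρ d
  have hcompl : IsCompl (LinearMap.ker ρ) (LinearMap.ker π) := by
    rw [hker]
    exact (LinearMap.isCompl_of_proj hρ).symm
  exact ⟨LinearMap.equivProdOfSurjectiveOfIsCompl ρ π
    (LinearMap.range_eq_top.2 fun d => ⟨d, hρ d⟩) (LinearMap.range_eq_top.2 hπ) hcompl⟩

lemma exists_linearEquiv_semiconj_of_aeval_linearEquiv (e : AEval' T ≃ₗ[K[X]] AEval' S) :
    ∃ G : V ≃ₗ[K] W, Function.Semiconj G T S :=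
  ⟨AEval'.of T ≪≫ₗ e.restrictScalars K ≪≫ₗ (AEval'.of S).symm, fun x => by
    change (AEval'.of S).symm (e (AEval'.of T (T x))) = S ((AEval'.of S).symm (e (AEval'.of T x)))
    rw [← Module.AEval'.X_smul_of, map_smul]
    exact Module.AEval.of_symm_X_smul S _⟩

lemma nonempty_aeval_rightShift_linearEquiv (e : V ≃ₗ[K] W) :
    Nonempty (AEval' (rightShift K V) ≃ₗ[K[X]] AEval' (rightShift K W)) := by
  refine ⟨LinearEquiv.ofAEval _
    (LinearEquiv.piCongrRight (fun _ => e) ≪≫ₗ AEval'.of (rightShift K W)) fun v => ?_⟩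
  refine (congrArg (AEval'.of (rightShift K W)) (funext fun n => ?_)).trans
    (Module.AEval.X_smul_of (rightShift K W) fun n => e (v n)).symm
  cases n with
  | zero => exact map_zero e
  | succ n => rfl

theorem exists_linearEquiv_semiconj_of_hasBorelProperty
    (hT : Function.Injective T) (hS : Function.Injective S)
    (hqT : ∀ q : K[X], ¬ X ∣ q → Function.Bijective (aeval T q))
    (hqS : ∀ q : K[X], ¬ X ∣ q → Function.Bijective (aeval S q))
    (hBT : HasBorelProperty T) (hBS : HasBorelProperty S)
    (hquot : Cardinal.lift.{w} (Module.rank K (V ⧸ LinearMap.range T)) =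
      Cardinal.lift.{v} (Module.rank K (W ⧸ LinearMap.range S)))
    (hdiv : Cardinal.lift.{w} (Module.rank K[X] (divisiblePart T)) =
      Cardinal.lift.{v} (Module.rank K[X] (divisiblePart S))) :
    ∃ G : V ≃ₗ[K] W, Function.Semiconj G T S := by
  obtain ⟨eT⟩ := nonempty_aeval_linearEquiv_prod hT hqT hBT
  obtain ⟨eS⟩ := nonempty_aeval_linearEquiv_prod hS hqS hBS
  obtain ⟨d⟩ := nonempty_linearEquiv_of_bijective_smul
    (fun _ => bijective_smul_divisiblePart hT hqT) (fun _ => bijective_smul_divisiblePart hS hqS)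
    hdiv
  obtain ⟨q⟩ := nonempty_linearEquiv_of_lift_rank_eq hquot
  obtain ⟨r⟩ := nonempty_aeval_rightShift_linearEquiv q
  exact exists_linearEquiv_semiconj_of_aeval_linearEquiv (eT ≪≫ₗ d.prodCongr r ≪≫ₗ eS.symm)

end Classification

section SpectralRadius

open Filter

variable {A : Type*} [NormedRing A] [NormedAlgebra ℂ A] {a b : A}

lemma spectralRadius_eq_zero_iff_spectrum_subset :
    spectralRadius ℂ a = 0 ↔ spectrum ℂ a ⊆ {0} := by
  simp only [spectralRadius, ENNReal.iSup_eq_zero, ENNReal.coe_eq_zero, nnnorm_eq_zero]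
  exact Iff.rfl

variable [CompleteSpace A]

lemma spectralRadius_eq_zero_iff_eventually_norm_pow_le :
    spectralRadius ℂ a = 0 ↔ ∀ r : ℝ, 0 < r → ∀ᶠ n : ℕ in atTop, ‖a ^ n‖ ≤ r ^ n := by
  have hgelfand := spectrum.pow_norm_pow_one_div_tendsto_nhds_spectralRadius a
  have hroot (r : ℝ) (hr : 0 < r) (n : ℕ) (hn : n ≠ 0) :
      ENNReal.ofReal (‖a ^ n‖ ^ (1 / n : ℝ)) ≤ ENNReal.ofReal r ↔ ‖a ^ n‖ ≤ r ^ n := by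
    rw [ENNReal.ofReal_le_ofReal_iff hr.le, one_div,
      Real.rpow_inv_le_iff_of_pos (norm_nonneg _) hr.le (by positivity), Real.rpow_natCast]
  refine ⟨fun h r hr => ?_, fun h => ?_⟩
  · rw [h] at hgelfand
    filter_upwards [hgelfand.eventually_le_const (ENNReal.ofReal_pos.2 hr), eventually_ne_atTop 0]
      with n hn hn0
    exact (hroot r hr n hn0).1 hn
  · refine le_antisymm (le_of_forall_gt_imp_ge_of_dense fun ε hε => ?_) zero_le
    obtain ⟨r, -, hrε⟩ := ENNReal.lt_iff_exists_real_btwn.1 hε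
    refine (le_of_tendsto hgelfand ?_).trans hrε.2.le
    have hr0 : 0 < r := ENNReal.ofReal_pos.1 hrε.1
    filter_upwards [h r hr0, eventually_ne_atTop 0] with n hn hn0
    exact (hroot r hr0 n hn0).2 hn

lemma spectralRadius_mul_eq_zero (hab : Commute a b) (ha : spectralRadius ℂ a = 0) :
    spectralRadius ℂ (a * b) = 0 := by
  rw [spectralRadius_eq_zero_iff_eventually_norm_pow_le] at ha ⊢
  intro r hr
  filter_upwards [ha (r / (‖b‖ + 1)) (by positivity), eventually_gt_atTop 0] with n hn hn0
  calc ‖(a * b) ^ n‖ ≤ ‖a ^ n‖ * ‖b ^ n‖ := hab.mul_pow n ▸ norm_mul_le _ _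
    _ ≤ (r / (‖b‖ + 1)) ^ n * (‖b‖ + 1) ^ n := by
      gcongr
      exact (norm_pow_le' b hn0).trans (by gcongr; linarith)
    _ = r ^ n := by rw [← mul_pow, div_mul_cancel₀ _ (by positivity)]

end SpectralRadius

section Quasinilpotent

open Filter Polynomial

lemma isQuasinilpotentOp_iff_spectrum_subset {V : Type*} [AddCommGroup V] [Module ℂ V]
    {T : Module.End ℂ V} : IsQuasinilpotentOp T ↔ spectrum ℂ T ⊆ {0} := by
  refine forall_congr' fun z => ?_
  rw [← not_imp_not, not_ne_iff, Set.mem_singleton_iff, spectrum.mem_iff, ← IsUnit.neg_iff, neg_sub,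
    Module.End.isUnit_iff]
  exact Iff.rfl

lemma IsQuasinilpotentOp.bijective_aeval {V : Type*} [AddCommGroup V] [Module ℂ V]
    {T : Module.End ℂ V} (hT : IsQuasinilpotentOp T) {q : ℂ[X]} (hq : ¬ X ∣ q) :
    Function.Bijective (aeval T q) := by
  rw [← Module.End.isUnit_iff, (IsAlgClosed.splits q).eq_prod_roots, map_mul]
  have hq0 : q ≠ 0 := fun h => hq (h ▸ dvd_zero X)
  refine ((isUnit_C.2 (leadingCoeff_ne_zero.2 hq0).isUnit).map (aeval T)).mul ?_
  by_contra hprod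
  obtain ⟨z, hz, hqz⟩ := spectrum.exists_mem_of_not_isUnit_aeval_prod hprod
  rw [isQuasinilpotentOp_iff_spectrum_subset] at hT
  rw [hT hz, ← coeff_zero_eq_eval_zero] at hqz
  exact hq (X_dvd_iff.2 hqz)

lemma IsQuasinilpotentOp.of_semiconj {V W : Type*} [AddCommGroup V] [Module ℂ V]
    [AddCommGroup W] [Module ℂ W] {T : Module.End ℂ V} {S : Module.End ℂ W}
    (hS : IsQuasinilpotentOp S) (G : V ≃ₗ[ℂ] W) (hG : Function.Semiconj G T S) :
    IsQuasinilpotentOp T := by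
  intro z hz
  refine (Function.Bijective.of_comp_iff' G.bijective _).1 ?_
  convert (hS z hz).comp G.bijective using 1
  funext x
  simp only [Function.comp_apply, map_sub, map_smul, hG.eq]

variable {E : Type*} [NormedAddCommGroup E] [NormedSpace ℂ E] [CompleteSpace E] {T : E →L[ℂ] E}

lemma isQuasinilpotentOp_iff_spectralRadius_eq_zero :
    IsQuasinilpotentOp (T : E →ₗ[ℂ] E) ↔ spectralRadius ℂ T = 0 := by
  rw [spectralRadius_eq_zero_iff_spectrum_subset]
  refine forall_congr' fun z => ?_
  rw [← not_imp_not, not_ne_iff, Set.mem_singleton_iff, spectrum.mem_iff, ← IsUnit.neg_iff, neg_sub,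
    ContinuousLinearMap.isUnit_iff_bijective]
  exact Iff.rfl

lemma IsQuasinilpotentOp.not_antilipschitzWith [Nontrivial E]
    (hT : IsQuasinilpotentOp (T : E →ₗ[ℂ] E)) (K : NNReal) : ¬ AntilipschitzWith K T := by
  intro hK
  rw [isQuasinilpotentOp_iff_spectralRadius_eq_zero,
    spectralRadius_eq_zero_iff_eventually_norm_pow_le] at hT
  obtain ⟨x, hx⟩ := exists_ne (0 : E)
  have hle (n : ℕ) : ‖x‖ ≤ K ^ n * ‖(T ^ n) x‖ := by
    induction n with
    | zero => simp
    | succ n ih =>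
      refine ih.trans ?_
      rw [pow_succ, mul_assoc, pow_succ' T]
      gcongr
      exact ZeroHomClass.bound_of_antilipschitz T hK _
  obtain ⟨r, hr, hKr⟩ : ∃ r : ℝ, 0 < r ∧ K * r < 1 := by
    refine ⟨((K : ℝ) + 1)⁻¹, by positivity, ?_⟩
    rw [mul_inv_lt_iff₀ (by positivity)]
    linarith
  obtain ⟨n, hn, hn0⟩ := ((hT r hr).and (eventually_ne_atTop 0)).exists
  refine (hle n).not_gt ?_
  calc (K : ℝ) ^ n * ‖(T ^ n) x‖ ≤ K ^ n * (r ^ n * ‖x‖) := by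
        gcongr
        exact (T ^ n).le_of_opNorm_le hn x
    _ = (K * r) ^ n * ‖x‖ := by rw [mul_pow, mul_assoc]
    _ < ‖x‖ := mul_lt_of_lt_one_left (norm_pos_iff.2 hx) (pow_lt_one₀ (by positivity) hKr hn0)

end Quasinilpotent

section AlmostDisjoint

/-- The sets of codes of the initial segments of the sequences `ℕ → α`. -/
lemma exists_infinite_pairwise_inter_finite (α : Type*) [Countable α] :
    ∃ A : (ℕ → α) → Set ℕ, (∀ x, (A x).Infinite) ∧ Pairwise fun x y => (A x ∩ A y).Finite := by
  let := Encodable.ofCountable α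
  let code (x : ℕ → α) (n : ℕ) : ℕ := Encodable.encode (List.map x (List.range n))
  have hlist {x y : ℕ → α} {n k : ℕ} (h : code x n = code y k) :
      List.map x (List.range n) = List.map y (List.range k) := Encodable.encode_injective h
  have hlen {x y : ℕ → α} {n k : ℕ} (h : code x n = code y k) : n = k := by
    simpa only [List.length_map, List.length_range] using congrArg List.length (hlist h)
  refine ⟨fun x => range (code x), fun x => infinite_range_of_injective fun _ _ => hlen,
    fun x y hxy => ?_⟩
  obtain ⟨m, hm⟩ := Function.ne_iff.1 hxy
  refine ((finite_Iic m).image (code x)).subset ?_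
  rintro _ ⟨⟨n, rfl⟩, ⟨k, hk⟩⟩
  obtain rfl := hlen hk
  refine ⟨k, mem_Iic.2 (le_of_not_gt fun hmk => hm ?_), rfl⟩
  exact (List.map_inj_left.1 (hlist hk) m (List.mem_range.2 hmk)).symm

lemma infinite_sep_forall_notMem {ι β : Type*} {A : ι → Set β} (hinf : ∀ i, (A i).Infinite)
    (hfin : Pairwise fun i j => (A i ∩ A j).Finite) (s : Finset ι) (i : ι) :
    {n ∈ A i | ∀ j ∈ s, j ≠ i → n ∉ A j}.Infinite := by
  have hunion : (⋃ j ∈ {j ∈ (s : Set ι) | j ≠ i}, A i ∩ A j).Finite :=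
    (s.finite_toSet.subset (sep_subset _ _)).biUnion fun j hj => hfin hj.2.symm
  refine ((hinf i).sdiff hunion).mono fun n hn => ⟨hn.1, fun j hj hji hnj => hn.2 ?_⟩
  exact mem_biUnion (show j ∈ {j ∈ (s : Set ι) | j ≠ i} from ⟨hj, hji⟩) ⟨hn.1, hnj⟩

end AlmostDisjoint

section GlidingHump

open Filter
open scoped Nat NNReal

variable {𝕜 E F : Type*} [RCLike 𝕜] [NormedAddCommGroup E] [NormedSpace 𝕜 E]
  [NormedAddCommGroup F] [NormedSpace 𝕜 F] {T : E →L[𝕜] F}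

lemma exists_preimage_norm_le_of_approx [CompleteSpace E] {C : ℝ} (hC : 0 ≤ C)
    (h : ∀ x, ∃ x', ‖x'‖ ≤ C * ‖T x‖ ∧ ‖T x - T x'‖ ≤ ‖T x‖ / 2) (x : E) :
    ∃ x', ‖x'‖ ≤ 2 * C * ‖T x‖ ∧ T x' = T x := by
  choose f hf hf' using h
  let r (n : ℕ) : E := (fun v => v - f v)^[n] x
  have hr (n : ℕ) : r (n + 1) = r n - f (r n) := Function.iterate_succ_apply' _ n x
  have hTr (n : ℕ) : ‖T (r n)‖ ≤ ‖T x‖ / 2 ^ n := by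
    induction n with
    | zero => simp [r]
    | succ n ih =>
      rw [hr, map_sub, pow_succ, ← div_div]
      exact (hf' _).trans (by linarith)
  have hbound (n : ℕ) : ‖f (r n)‖ ≤ 2 * C * ‖T x‖ / 2 / 2 ^ n :=
    (hf (r n)).trans ((mul_le_mul_of_nonneg_left (hTr n) hC).trans_eq (by ring))
  have hgeom : HasSum (fun n => 2 * C * ‖T x‖ / 2 / 2 ^ n) (2 * C * ‖T x‖) :=
    hasSum_geometric_two' _
  have hsum : Summable fun n => f (r n) := .of_norm_bounded hgeom.summable hbound
  have hpart (n : ℕ) : ∑ k ∈ Finset.range n, f (r k) = x - r n := by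
    induction n with
    | zero => simp [r]
    | succ n ih => rw [Finset.sum_range_succ, ih, hr]; abel
  have hTr0 : Tendsto (fun n => T (r n)) atTop (nhds 0) :=
    squeeze_zero_norm hTr
      (tendsto_const_nhds.div_atTop (tendsto_pow_atTop_atTop_of_one_lt one_lt_two))
  refine ⟨∑' n, f (r n), tsum_of_norm_bounded hgeom hbound, ?_⟩
  refine tendsto_nhds_unique ((T.continuous.tendsto _).comp hsum.hasSum.tendsto_sum_nat) ?_
  simpa only [Function.comp_def, hpart, map_sub, sub_zero] using hTr0.const_sub (T x)

lemma exists_forall_lt_norm_sub [CompleteSpace E] (hT : Function.Injective T)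
    (hanti : ∀ K, ¬ AntilipschitzWith K T) {C : ℝ} (hC : 0 ≤ C) :
    ∃ u, ∀ w, ‖w‖ ≤ C * ‖T u‖ → ‖T u‖ / 2 < ‖T u - T w‖ := by
  by_contra! happrox
  refine hanti ⟨2 * C, by positivity⟩ (T.antilipschitz_of_bound fun x => ?_)
  obtain ⟨x', hx', hTx'⟩ := exists_preimage_norm_le_of_approx hC happrox x
  obtain rfl := hT hTx'
  exact hx'

lemma exists_norm_eq_forall_lt_norm_sub [CompleteSpace E] (hT : Function.Injective T)
    (hanti : ∀ K, ¬ AntilipschitzWith K T) {δ N : ℝ} (hδ : 0 < δ) (hN : 0 ≤ N) :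
    ∃ u, ‖T u‖ = δ ∧ ∀ w, ‖w‖ ≤ N → δ / 2 < ‖T u - T w‖ := by
  obtain ⟨u, hu⟩ := exists_forall_lt_norm_sub hT hanti (div_nonneg hN hδ.le)
  have hTu : 0 < ‖T u‖ := by
    refine norm_pos_iff.2 fun h => ?_
    simpa [h] using hu 0 (by simp [h])
  obtain ⟨c, hc⟩ : ∃ c : 𝕜, ‖c‖ = δ / ‖T u‖ :=
    ⟨(δ / ‖T u‖ : ℝ), RCLike.norm_of_nonneg (by positivity)⟩
  have hc0 : 0 < ‖c‖ := hc ▸ by positivity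
  have hcδ : ‖c‖ * ‖T u‖ = δ := by rw [hc, div_mul_cancel₀ _ hTu.ne']
  refine ⟨c • u, by rw [map_smul, norm_smul, hcδ], fun w hw => ?_⟩
  have hfar := hu (c⁻¹ • w) (by
    rw [norm_smul, norm_inv, hc, inv_div, div_mul_eq_mul_div, div_mul_eq_mul_div,
      mul_comm]
    gcongr)
  calc δ / 2 = ‖c‖ * (‖T u‖ / 2) := by rw [← hcδ, mul_div_assoc]
    _ < ‖c‖ * ‖T u - T (c⁻¹ • w)‖ := mul_lt_mul_of_pos_left hfar hc0
    _ = ‖T (c • u) - T w‖ := by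
      rw [← norm_smul, smul_sub, map_smul, map_smul, smul_inv_smul₀ (norm_pos_iff.1 hc0)]

/-- A gliding hump for `T`: a sequence whose images are small, but far from the images of all
vectors whose size is comparable with the preceding terms. -/
def IsGlidingHump (T : E →L[𝕜] F) (u : ℕ → E) : Prop :=
  ∀ k, ‖T (u k)‖ = (k ! : ℝ)⁻¹ ∧ ∀ w, ‖w‖ ≤ k * (1 + ∑ j ∈ Finset.range k, ‖u j‖) →
    (k ! : ℝ)⁻¹ / 2 < ‖T (u k) - T w‖

lemma exists_isGlidingHump [CompleteSpace E] (hT : Function.Injective T)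
    (hanti : ∀ K, ¬ AntilipschitzWith K T) : ∃ u, IsGlidingHump T u := by
  choose! U hU using fun (k : ℕ) (S : ℝ) (hS : 0 ≤ S) =>
    exists_norm_eq_forall_lt_norm_sub hT hanti (δ := (k ! : ℝ)⁻¹) (N := k * (1 + S))
      (by positivity) (by positivity)
  let S (n : ℕ) : ℝ := Nat.rec 0 (fun k t => t + ‖U k t‖) n
  have hS (n : ℕ) : S n = ∑ k ∈ Finset.range n, ‖U k (S k)‖ := by
    induction n with
    | zero => rfl
    | succ n ih => rw [Finset.sum_range_succ, ← ih]
  refine ⟨fun k => U k (S k), fun k => ?_⟩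
  rw [← hS]
  exact hU k (S k) (hS k ▸ Finset.sum_nonneg fun _ _ => norm_nonneg _)

lemma norm_tsum_nat_add_le_of_norm_le_inv_factorial {b : ℕ → F} {C : ℝ}
    (hb : ∀ k, ‖b k‖ ≤ C * (k ! : ℝ)⁻¹) {j : ℕ} (hj : j ≠ 0) :
    ‖∑' i, b (i + (j + 1))‖ ≤ C * (j ! : ℝ)⁻¹ / j := by
  have hC : 0 ≤ C := by simpa using (norm_nonneg _).trans (hb 0)
  have hj0 : (0 : ℝ) < j := by positivity
  set r : ℝ := ((j : ℝ) + 1)⁻¹ with hr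
  have hr0 : r ≠ 0 := by positivity
  have hr1 : r < 1 := inv_lt_one_of_one_lt₀ (by linarith)
  have hgeom := (hasSum_geometric_of_lt_one (by positivity) hr1).mul_left (C * (j ! : ℝ)⁻¹ * r)
  have hval : C * (j ! : ℝ)⁻¹ * r * (1 - r)⁻¹ = C * (j ! : ℝ)⁻¹ / j := by
    have h1r : 1 - r = j * r := by rw [hr]; field_simp; ring
    rw [h1r]
    field_simp
  refine tsum_of_norm_bounded (hval ▸ hgeom) fun i => (hb _).trans ?_
  rw [mul_assoc, mul_assoc, ← pow_succ', hr, inv_pow, ← mul_inv]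
  refine mul_le_mul_of_nonneg_left (inv_anti₀ (by positivity) ?_) hC
  have hfact : j ! * (j + 1) ^ (i + 1) ≤ (i + (j + 1))! := by
    rw [show i + (j + 1) = j + (i + 1) by ring]
    exact Nat.factorial_mul_pow_le_factorial
  exact_mod_cast hfact

lemma IsGlidingHump.norm_smul_apply_le {u : ℕ → E} (hu : IsGlidingHump T u) {a : ℕ → 𝕜} {C : ℝ}
    (ha : ∀ k, ‖a k‖ ≤ C) (k : ℕ) : ‖a k • T (u k)‖ ≤ C * (k ! : ℝ)⁻¹ := by
  rw [norm_smul, (hu k).1]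
  exact mul_le_mul_of_nonneg_right (ha k) (by positivity)

lemma IsGlidingHump.summable_smul_apply [CompleteSpace F] {u : ℕ → E} (hu : IsGlidingHump T u)
    {a : ℕ → 𝕜} {C : ℝ} (ha : ∀ k, ‖a k‖ ≤ C) : Summable fun k => a k • T (u k) :=
  .of_norm_bounded (.mul_left C (by simpa using Real.summable_pow_div_factorial 1))
    (hu.norm_smul_apply_le ha)

lemma IsGlidingHump.lt_norm_smul_sub {u : ℕ → E} (hu : IsGlidingHump T u) {c : 𝕜} (hc : c ≠ 0)
    {k : ℕ} {w : E} (hw : ‖w‖ ≤ ‖c‖ * (k * (1 + ∑ j ∈ Finset.range k, ‖u j‖))) :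
    ‖c‖ * ((k ! : ℝ)⁻¹ / 2) < ‖c • T (u k) - T w‖ := by
  have hc0 : 0 < ‖c‖ := norm_pos_iff.2 hc
  have hfar := (hu k).2 (c⁻¹ • w) (by rwa [norm_smul, norm_inv, inv_mul_le_iff₀ hc0])
  calc ‖c‖ * ((k ! : ℝ)⁻¹ / 2) < ‖c‖ * ‖T (u k) - T (c⁻¹ • w)‖ := mul_lt_mul_of_pos_left hfar hc0
    _ = ‖c • T (u k) - T w‖ := by rw [← norm_smul, smul_sub, map_smul, smul_inv_smul₀ hc]

lemma IsGlidingHump.mul_norm_le [CompleteSpace F] {u : ℕ → E} (hu : IsGlidingHump T u)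
    {a : ℕ → 𝕜} {C : ℝ} (ha : ∀ k, ‖a k‖ ≤ C) {v : E} (hv : T v = ∑' k, a k • T (u k)) (k : ℕ) :
    k * ‖a k‖ ≤ ‖v‖ + 2 * C := by
  have hC : 0 ≤ C := (norm_nonneg _).trans (ha 0)
  by_contra! hlt
  have hak : 0 < k * ‖a k‖ := lt_of_le_of_lt (by positivity) hlt
  have hk : k ≠ 0 := by rintro rfl; simp at hak
  have hak0 : a k ≠ 0 := by rintro h; simp [h] at hak
  let w : E := v - ∑ j ∈ Finset.range k, a j • u j
  have hw : ‖w‖ ≤ ‖a k‖ * (k * (1 + ∑ j ∈ Finset.range k, ‖u j‖)) := by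
    have hsum : ‖∑ j ∈ Finset.range k, a j • u j‖ ≤ C * ∑ j ∈ Finset.range k, ‖u j‖ := by
      rw [Finset.mul_sum]
      refine norm_sum_le_of_le _ fun j _ => ?_
      rw [norm_smul]
      exact mul_le_mul_of_nonneg_right (ha j) (norm_nonneg _)
    have hS : 0 ≤ ∑ j ∈ Finset.range k, ‖u j‖ := Finset.sum_nonneg fun _ _ => norm_nonneg _
    have hw' : ‖w‖ ≤ ‖v‖ + C * ∑ j ∈ Finset.range k, ‖u j‖ :=
      (norm_sub_le _ _).trans (add_le_add_right hsum _)
    nlinarith [norm_nonneg v]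
  have hdiff : a k • T (u k) - T w = -∑' i, a (i + (k + 1)) • T (u (i + (k + 1))) := by
    have hsplit := (hu.summable_smul_apply ha).sum_add_tsum_nat_add (k + 1)
    rw [← hv, Finset.sum_range_succ, add_assoc, ← eq_sub_iff_add_eq'] at hsplit
    simp only [w, map_sub, map_sum, map_smul, ← hsplit, sub_add_cancel_left]
  have hfar := hu.lt_norm_smul_sub hak0 hw
  rw [hdiff, norm_neg] at hfar
  have htail := norm_tsum_nat_add_le_of_norm_le_inv_factorial (hu.norm_smul_apply_le ha) hk
  have hfact : (0 : ℝ) < (k ! : ℝ)⁻¹ := by positivity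
  rw [le_div_iff₀ (by positivity)] at htail
  nlinarith [norm_nonneg v, (by positivity : (0 : ℝ) < k)]

lemma continuum_le_rank_quotient_range [CompleteSpace E] [CompleteSpace F]
    (hT : Function.Injective T) (hanti : ∀ K, ¬ AntilipschitzWith K T) :
    Cardinal.continuum ≤ Module.rank 𝕜 (F ⧸ LinearMap.range (T : E →ₗ[𝕜] F)) := by
  obtain ⟨u, hu⟩ := exists_isGlidingHump hT hanti
  obtain ⟨A, hinf, hfin⟩ := exists_infinite_pairwise_inter_finite Bool
  let χ (x : ℕ → Bool) : ℕ → 𝕜 := indicator (A x) 1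
  have hχ (x : ℕ → Bool) (k : ℕ) : ‖χ x k‖ ≤ 1 := by
    by_cases h : k ∈ A x <;> simp [χ, h]
  have hli : LinearIndependent 𝕜 fun x =>
      (LinearMap.range (T : E →ₗ[𝕜] F)).mkQ (∑' k, χ x k • T (u k)) := by
    refine linearIndependent_iff'.2 fun s g hg i hi => ?_
    simp only [← map_smul (Submodule.mkQ _), ← map_sum (Submodule.mkQ _)] at hg
    obtain ⟨v, hv⟩ := (Submodule.Quotient.mk_eq_zero _).1 hg
    have hcomb : T v = ∑' k, (∑ x ∈ s, g x * χ x k) • T (u k) := by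
      refine hv.trans ?_
      simp only [Finset.sum_smul, mul_smul]
      rw [Summable.tsum_finsetSum fun x _ => (hu.summable_smul_apply (hχ x)).const_smul (g x)]
      exact Finset.sum_congr rfl fun x _ =>
        ((hu.summable_smul_apply (hχ x)).tsum_const_smul (g x)).symm
    have hle := hu.mul_norm_le (C := ∑ x ∈ s, ‖g x‖) (fun k => norm_sum_le_of_le _ fun x _ => by
      rw [norm_mul]
      exact mul_le_of_le_one_right (norm_nonneg _) (hχ x k)) hcomb
    by_contra hgi
    obtain ⟨N, hN⟩ := exists_nat_gt ((‖v‖ + 2 * ∑ x ∈ s, ‖g x‖) / ‖g i‖)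
    obtain ⟨k, ⟨hki, hks⟩, hNk⟩ := (infinite_sep_forall_notMem hinf hfin s i).exists_gt N
    have hcoeff : ∑ x ∈ s, g x * χ x k = g i := by
      rw [Finset.sum_eq_single_of_mem i hi fun x hx hxi => by simp [χ, hks x hx hxi]]
      simp [χ, hki]
    have hNk' : (N : ℝ) < k := by exact_mod_cast hNk
    have hbound := hle k
    rw [hcoeff, ← le_div_iff₀ (norm_pos_iff.2 hgi)] at hbound
    linarith
  simpa using hli.cardinal_lift_le_rank

end GlidingHump

section MittagLeffler

open Filter

variable {Y : Type*} [MetricSpace Y] {f : Y → Y}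

lemma eventually_forall_le_dist_iterate_lt (hf : Continuous f) (y : Y) (n : ℕ) {ε : ℝ}
    (hε : 0 < ε) : ∀ᶠ z in nhds y, ∀ j ≤ n, dist (f^[j] z) (f^[j] y) < ε :=
  (eventually_all_finite (finite_Iic n)).2 fun j _ =>
    Metric.tendsto_nhds.1 ((hf.iterate j).tendsto y) ε hε

lemma dense_setOf_exists_backward_orbit [CompleteSpace Y] (hf : Continuous f)
    (hd : DenseRange f) : Dense {y | ∃ z : ℕ → Y, z 0 = y ∧ ∀ n, f (z (n + 1)) = z n} := by
  refine Metric.dense_iff.2 fun y ε hε => ?_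
  have hstep (w : Y) (n : ℕ) : ∃ w', ∀ j ≤ n, dist (f^[j] (f w')) (f^[j] w) < ε / 2 / 2 / 2 ^ n :=
    hd.mem_nhds (eventually_forall_le_dist_iterate_lt hf w n (by positivity))
  choose p hp using hstep
  let w (n : ℕ) : Y := Nat.rec y (fun n w => p w n) n
  have hw (n j : ℕ) (hj : j ≤ n) : dist (f^[j] (f (w (n + 1)))) (f^[j] (w n)) < ε / 2 / 2 / 2 ^ n :=
    hp (w n) n j hj
  have hdist (k n : ℕ) :
      dist (f^[n] (w (n + k))) (f^[n + 1] (w (n + 1 + k))) ≤ ε / 2 / 2 / 2 ^ n := by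
    rw [dist_comm, Function.iterate_succ_apply, add_right_comm n 1 k]
    refine (hw (n + k) n (Nat.le_add_right n k)).le.trans ?_
    gcongr
    · exact one_le_two
    · exact Nat.le_add_right n k
  choose z hz using fun k => cauchySeq_tendsto_of_complete (cauchySeq_of_le_geometric_two (hdist k))
  refine ⟨z 0, ?_, z, rfl, fun k => ?_⟩
  · have hle := dist_le_of_le_geometric_two_of_tendsto₀ (hdist 0) (hz 0)
    rw [Metric.mem_ball, dist_comm]
    exact hle.trans_lt (half_lt_self hε)
  · refine tendsto_nhds_unique ((hf.tendsto _).comp (hz (k + 1))) ?_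
    refine ((hz k).comp (tendsto_add_atTop_nat 1)).congr fun n => ?_
    simp only [Function.comp_apply, Function.iterate_succ_apply', add_assoc, add_comm 1 k]

end MittagLeffler

section ClosedDescent

open Filter

/-- The closed finite descent condition: the decreasing sequence of the closures of the ranges of
the powers of `T` has two equal consecutive terms. -/
def HasClosedFiniteDescent {R X : Type*} [Semiring R] [AddCommMonoid X] [Module R X]
    [TopologicalSpace X] (T : Module.End R X) : Prop :=
  ∃ m : ℕ, closure (LinearMap.range (T ^ m) : Set X) =
    closure (LinearMap.range (T ^ (m + 1)) : Set X)

variable {𝕜 X : Type*} [NontriviallyNormedField 𝕜] [NormedAddCommGroup X] [NormedSpace 𝕜 X]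
  {T : Module.End 𝕜 X}

lemma pow_apply_backward_orbit {z : ℕ → X} (hz : ∀ n, T (z (n + 1)) = z n) (k n : ℕ) :
    (T ^ n) (z (k + n)) = z k := by
  induction n with
  | zero => rfl
  | succ n ih => rw [pow_succ, Module.End.mul_apply, ← add_assoc, hz, ih]

lemma range_pow_subset_closure_image_hyperrange [CompleteSpace X] (hT : Continuous T) {m : ℕ}
    (hm : closure (LinearMap.range (T ^ m) : Set X) =
      closure (LinearMap.range (T ^ (m + 1)) : Set X)) :
    (LinearMap.range (T ^ m) : Set X) ⊆ closure ((T ^ m) '' hyperrange T) := by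
  set Y : Set X := closure (LinearMap.range (T ^ m) : Set X)
  have hsucc : T '' (LinearMap.range (T ^ m)) = LinearMap.range (T ^ (m + 1)) := by
    rw [pow_succ', Module.End.mul_eq_comp, LinearMap.range_comp, Submodule.map_coe]
  have hY : Y = closure (T '' LinearMap.range (T ^ m)) := by rw [hsucc, hm]
  have hmaps : MapsTo T Y Y := fun y hy =>
    hY ▸ image_closure_subset_closure_image hT (mem_image_of_mem T hy)
  have hdense : DenseRange (hmaps.restrict T Y Y) := by
    refine Subtype.dense_iff.2 ?_
    rw [← range_comp, MapsTo.coe_restrict, range_domRestrict]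
    exact hY.subset.trans (closure_mono (image_mono subset_closure))
  have : CompleteSpace Y := isClosed_closure.completeSpace_coe
  have hML := Subtype.dense_iff.1 (dense_setOf_exists_backward_orbit (hT.restrict hmaps) hdense)
  refine subset_closure.trans (hML.trans (closure_mono ?_))
  rintro _ ⟨_, ⟨z, rfl, hz⟩, rfl⟩
  have horbit := pow_apply_backward_orbit (z := fun n => (z n : X)) fun n =>
    congrArg Subtype.val (hz n)
  exact ⟨z m, mem_hyperrange.2 fun n => ⟨z (m + n), horbit m n⟩, by simpa using horbit 0 m⟩

lemma HasBorelProperty.of_summable (hT : Continuous T)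
    (h : ∀ s : ℕ → X, ∃ v : ℕ → X, (∀ k, v k ∈ hyperrange T) ∧
      ∀ n, Summable fun i => (T ^ i) (s (i + n) - v (i + n))) :
    HasBorelProperty T := by
  intro s
  obtain ⟨v, hv, hsum⟩ := h s
  refine ⟨∑' i, (T ^ i) (s i - v i), fun n => ?_⟩
  have hTn : Continuous (T ^ n) := Module.End.coe_pow T n ▸ hT.iterate n
  choose w hw using fun k => mem_hyperrange.1 (hv k) n
  refine ⟨∑' i, (T ^ i) (s (i + n) - v (i + n)) - ∑ k ∈ Finset.range n, (T ^ k) (w k), ?_⟩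
  have hcomm (i : ℕ) (y : X) : (T ^ n) ((T ^ i) y) = (T ^ i) ((T ^ n) y) := by
    rw [← Module.End.mul_apply, ← Module.End.mul_apply, pow_mul_comm]
  have htail : (T ^ n) (∑' i, (T ^ i) (s (i + n) - v (i + n))) =
      ∑' i, (T ^ (i + n)) (s (i + n) - v (i + n)) := by
    rw [(hsum n).map_tsum (T ^ n) hTn]
    simp only [hcomm, pow_add, Module.End.mul_apply]
  have hsum0 : Summable fun i => (T ^ i) (s i - v i) := hsum 0
  rw [← hsum0.sum_add_tsum_nat_add n, map_sub, htail]
  simp only [map_sum, hcomm, hw, map_sub, Finset.sum_sub_distrib]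
  abel

theorem HasClosedFiniteDescent.hasBorelProperty [CompleteSpace X] (hd : HasClosedFiniteDescent T)
    (hT : Continuous T) : HasBorelProperty T := by
  obtain ⟨m, hm⟩ := hd
  refine .of_summable hT fun s => ?_
  have happrox (k : ℕ) : ∃ v ∈ hyperrange T, ∀ j ≤ k, ‖(T ^ (j + m)) (s k - v)‖ < (1 / 2) ^ k := by
    have hnear := eventually_forall_le_dist_iterate_lt hT ((T ^ m) (s k)) k
      (show (0 : ℝ) < (1 / 2) ^ k by positivity)
    obtain ⟨_, hclose, v, hv, rfl⟩ := mem_closure_iff_nhds.1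
      (range_pow_subset_closure_image_hyperrange hT hm (LinearMap.mem_range_self _ (s k))) _ hnear
    refine ⟨v, hv, fun j hj => ?_⟩
    rw [← norm_neg, ← map_neg, neg_sub]
    simpa only [← Module.End.coe_pow, ← Module.End.mul_apply, ← pow_add, dist_eq_norm,
      ← map_sub] using hclose j hj
  choose v hv hsmall using happrox
  refine ⟨v, hv, fun n => (summable_nat_add_iff m).1 ?_⟩
  refine .of_norm_bounded summable_geometric_two fun i => ?_
  refine (hsmall (i + m + n) i (by omega)).le.trans ?_
  exact pow_le_pow_of_le_one (by norm_num) (by norm_num) (by omega)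

lemma exists_forall_le_norm_add_smul_add (Y : Submodule 𝕜 X) {v : X}
    (hv : v ∉ closure (Y : Set X)) (p : X) (r : ℝ) :
    ∃ c : 𝕜, ∀ y ∈ Y, r ≤ ‖p + c • v + y‖ := by
  have hv0 : 0 < ‖Y.mkQ v‖ := (norm_nonneg _).lt_of_ne' fun h =>
    hv (QuotientAddGroup.norm_mk_eq_zero_iff_mem_closure.1 h)
  obtain ⟨c, hc⟩ := NormedField.exists_lt_norm 𝕜 ((r + ‖Y.mkQ p‖) / ‖Y.mkQ v‖)
  refine ⟨c, fun y hy => ?_⟩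
  have hmk : Y.mkQ (p + c • v + y) = c • Y.mkQ v - -Y.mkQ p := by
    rw [map_add, map_add, map_smul, Submodule.mkQ_apply _ y, (Submodule.Quotient.mk_eq_zero Y).2 hy]
    abel
  have hle : ‖Y.mkQ (p + c • v + y)‖ ≤ ‖p + c • v + y‖ := Submodule.Quotient.norm_mk_le Y _
  have htri := norm_sub_norm_le (c • Y.mkQ v) (-Y.mkQ p)
  rw [norm_smul, norm_neg] at htri
  rw [div_lt_iff₀ hv0] at hc
  rw [hmk] at hle
  linarith

theorem HasBorelProperty.hasClosedFiniteDescent (hB : HasBorelProperty T) :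
    HasClosedFiniteDescent T := by
  by_contra hd
  have hstep (n : ℕ) (p : X) : ∃ s : X, ∀ y, (n : ℝ) ≤ ‖p + (T ^ n) s + (T ^ (n + 1)) y‖ := by
    obtain ⟨u, hu⟩ : ∃ u, (T ^ n) u ∉ closure (LinearMap.range (T ^ (n + 1)) : Set X) := by
      by_contra! hall
      refine hd ⟨n, (closure_minimal ?_ isClosed_closure).antisymm (closure_mono ?_)⟩
      · rintro _ ⟨u, rfl⟩
        exact hall u
      · rintro _ ⟨y, rfl⟩
        exact ⟨T y, by rw [pow_succ, Module.End.mul_apply]⟩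
    obtain ⟨c, hc⟩ := exists_forall_le_norm_add_smul_add _ hu p n
    refine ⟨c • u, fun y => ?_⟩
    rw [map_smul]
    exact hc _ (LinearMap.mem_range_self _ y)
  choose s hs using hstep
  let p (n : ℕ) : X := Nat.rec 0 (fun n p => p + (T ^ n) (s n p)) n
  have hp (n : ℕ) : p n = ∑ k ∈ Finset.range n, (T ^ k) (s k (p k)) := by
    induction n with
    | zero => rfl
    | succ n ih => rw [Finset.sum_range_succ, ← ih]
  obtain ⟨x, hx⟩ := hB fun k => s k (p k)
  obtain ⟨n, hn⟩ := exists_nat_gt ‖x‖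
  obtain ⟨y, hy⟩ := hx (n + 1)
  rw [Finset.sum_range_succ, ← hp] at hy
  exact (hs n (p n) y).not_gt (hy ▸ hn)

theorem hasBorelProperty_iff_hasClosedFiniteDescent [CompleteSpace X] (hT : Continuous T) :
    HasBorelProperty T ↔ HasClosedFiniteDescent T :=
  ⟨fun hB => hB.hasClosedFiniteDescent, fun hd => hd.hasBorelProperty hT⟩

end ClosedDescent

section Exponentials

open PowerSeries
open scoped Polynomial

lemma mul_mem_maxGenEigenspace_derivation {R A : Type*} [CommRing R] [CommRing A] [Algebra R A]
    (D : Derivation R A A) {a f : A} {α : R} (hf : D f = α • f) {k : ℕ} (ha : D^[k] a = 0) :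
    a * f ∈ Module.End.maxGenEigenspace (D : A →ₗ[R] A) α := by
  have hsub (b : A) : ((D : A →ₗ[R] A) - α • 1) (b * f) = D b * f := by
    simp [hf, mul_comm f]
  have hpow (n : ℕ) : (((D : A →ₗ[R] A) - α • 1) ^ n) (a * f) = D^[n] a * f := by
    induction n with
    | zero => rfl
    | succ n ih => rw [pow_succ', Module.End.mul_apply, ih, hsub, Function.iterate_succ_apply']
  rw [Module.End.mem_maxGenEigenspace]
  exact ⟨k, by rw [hpow, ha, zero_mul]⟩

variable {K : Type*} [Field K]

lemma derivative_rescale (α : K) (f : K⟦X⟧) :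
    derivative K (rescale α f) = α • rescale α (derivative K f) := by
  ext n
  simp only [coeff_derivative, coeff_rescale, coeff_smul, smul_eq_mul]
  ring

lemma iterate_derivative_coe (p : K[X]) (n : ℕ) :
    (derivative K)^[n] (p : K⟦X⟧) = (Polynomial.derivative^[n] p : K[X]) :=
  (Function.Semiconj.iterate_right (f := fun q : K[X] => (q : K⟦X⟧))
    (fun q => (derivative_coe q).symm) n p).symm

theorem linearIndependent_rescale_exp [Algebra ℚ K] :
    LinearIndependent K[X] fun α : K => rescale α (exp K) := by
  rw [linearIndependent_iff']
  intro s p hsum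
  have hind := (iSupIndep_iff_finsetSum_eq_zero_imp_eq_zero _).1
    (Module.End.independent_maxGenEigenspace (derivative K : K⟦X⟧ →ₗ[K] K⟦X⟧)) s
    (fun α => p α • rescale α (exp K))
  have hexp (α : K) : rescale α (exp K) ≠ 0 := fun h => by
    simpa [← coeff_zero_eq_constantCoeff, coeff_rescale] using congrArg (coeff 0) h
  refine fun α hα => ?_
  have hzero := hind (fun β _ => ?_) hsum α hα
  · rw [Algebra.smul_def, mul_eq_zero_iff_right (hexp α), algebraMap_apply'] at hzero
    simpa using hzero
  · rw [Algebra.smul_def, algebraMap_apply']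
    refine mul_mem_maxGenEigenspace_derivation _ ?_ (k := (p β).natDegree + 1) ?_
    · rw [derivative_rescale, derivative_exp]
    · simp [iterate_derivative_coe, Polynomial.iterate_derivative_eq_zero]

end Exponentials

section EntireSeries

open PowerSeries

variable (𝕜 : Type*) [RCLike 𝕜]

/-- The algebra of power series that converge everywhere. -/
def entireSeries : Subalgebra 𝕜 𝕜⟦X⟧ where
  carrier := {f | ∀ z : 𝕜, Summable fun n => coeff n f * z ^ n}
  mul_mem' {f g} hf hg z := by
    refine (summable_norm_sum_mul_antidiagonal_of_summable_norm (hf z).norm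
      (hg z).norm).of_norm.congr fun n => ?_
    rw [coeff_mul, Finset.sum_mul]
    refine Finset.sum_congr rfl fun p hp => ?_
    rw [← Finset.HasAntidiagonal.mem_antidiagonal.1 hp, pow_add, mul_mul_mul_comm]
  add_mem' {f g} hf hg z := by
    simpa only [map_add, add_mul] using (hf z).add (hg z)
  algebraMap_mem' c z := by
    refine summable_of_ne_finset_zero (s := {0}) fun n hn => ?_
    rw [PowerSeries.algebraMap_apply, Algebra.algebraMap_self, RingHom.id_apply, coeff_C,
      if_neg (Finset.notMem_singleton.1 hn), zero_mul]

variable {𝕜}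

lemma X_mem_entireSeries : (X : 𝕜⟦X⟧) ∈ entireSeries 𝕜 := fun z => by
  refine summable_of_ne_finset_zero (s := {1}) fun n hn => ?_
  rw [coeff_X, if_neg (Finset.notMem_singleton.1 hn), zero_mul]

lemma mem_entireSeries_of_X_pow_mul_mem {f : 𝕜⟦X⟧} {k : ℕ} (hf : X ^ k * f ∈ entireSeries 𝕜) :
    f ∈ entireSeries 𝕜 := by
  intro z
  rcases eq_or_ne z 0 with rfl | hz
  · refine summable_of_ne_finset_zero (s := {0}) fun n hn => ?_
    rw [zero_pow (Finset.notMem_singleton.1 hn), mul_zero]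
  · refine (((summable_nat_add_iff k).2 (hf z)).mul_right (z ^ k)⁻¹).congr fun n => ?_
    rw [coeff_X_pow_mul, pow_add, mul_assoc, mul_inv_cancel_right₀ (pow_ne_zero k hz)]

/-- The power series of `z ↦ exp (α z)`. -/
noncomputable def exponentialSeries (α : 𝕜) : entireSeries 𝕜 :=
  ⟨rescale α (exp 𝕜), fun z => by
    refine (NormedSpace.expSeries_div_summable (α * z)).congr fun n => ?_
    rw [coeff_rescale, coeff_exp, one_div, map_inv₀, map_natCast, mul_pow, div_eq_mul_inv,
      mul_right_comm]⟩

variable {A : Type*} [NormedRing A] [NormedAlgebra 𝕜 A] [NormOneClass A]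

lemma summable_norm_coeff_smul_pow (a : A) (f : entireSeries 𝕜) :
    Summable fun n => ‖coeff n (f : 𝕜⟦X⟧) • a ^ n‖ := by
  refine (f.2 (‖a‖ : 𝕜)).norm.of_nonneg_of_le (fun n => norm_nonneg _) fun n => ?_
  rw [norm_smul, norm_mul, norm_pow (‖a‖ : 𝕜), RCLike.norm_ofReal, abs_norm]
  gcongr
  exact norm_pow_le a n

variable [CompleteSpace A]

/-- The functional calculus `f ↦ f(a)` for everywhere convergent power series. -/
noncomputable def entireCalculus (a : A) : entireSeries 𝕜 →ₐ[𝕜] A :=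
  AlgHom.ofLinearMap
    { toFun := fun f => ∑' n, coeff n (f : 𝕜⟦X⟧) • a ^ n
      map_add' := fun f g => by
        simpa only [Subalgebra.coe_add, map_add, add_smul] using
          (summable_norm_coeff_smul_pow a f).of_norm.tsum_add
            (summable_norm_coeff_smul_pow a g).of_norm
      map_smul' := fun c f => by
        simpa only [Subalgebra.coe_smul, coeff_smul, smul_assoc, RingHom.id_apply] using
          (summable_norm_coeff_smul_pow a f).of_norm.tsum_const_smul c }
    (by
      change ∑' n, coeff n (1 : 𝕜⟦X⟧) • a ^ n = 1
      rw [tsum_eq_single 0 fun n hn => by rw [coeff_one, if_neg hn, zero_smul]]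
      simp)
    fun f g => by
      change ∑' n, coeff n (f * g : 𝕜⟦X⟧) • a ^ n =
        (∑' n, coeff n (f : 𝕜⟦X⟧) • a ^ n) * ∑' n, coeff n (g : 𝕜⟦X⟧) • a ^ n
      rw [tsum_mul_tsum_eq_tsum_sum_antidiagonal_of_summable_norm
        (summable_norm_coeff_smul_pow a f) (summable_norm_coeff_smul_pow a g)]
      congr! 2 with n
      rw [coeff_mul, Finset.sum_smul]
      refine Finset.sum_congr rfl fun p hp => ?_
      rw [← Finset.HasAntidiagonal.mem_antidiagonal.1 hp, pow_add, smul_mul_smul_comm]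

lemma entireCalculus_apply (a : A) (f : entireSeries 𝕜) :
    entireCalculus a f = ∑' n, coeff n (f : 𝕜⟦X⟧) • a ^ n := rfl

lemma entireCalculus_X (a : A) :
    entireCalculus a (⟨X, X_mem_entireSeries⟩ : entireSeries 𝕜) = a := by
  rw [entireCalculus_apply, tsum_eq_single 1 fun n hn => by rw [coeff_X, if_neg hn, zero_smul]]
  simp

lemma commute_entireCalculus (a : A) (f : entireSeries 𝕜) : Commute a (entireCalculus a f) := by
  simpa only [entireCalculus_X] using
    (Commute.all (⟨X, X_mem_entireSeries⟩ : entireSeries 𝕜) f).map (entireCalculus a)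

end EntireSeries

section EntireCalculus

open PowerSeries
open scoped Polynomial

variable {A : Type*} [NormedRing A] [NormedAlgebra ℂ A] [NormOneClass A] [CompleteSpace A]
  {a : A} {f : entireSeries ℂ}

lemma isUnit_entireCalculus (ha : spectralRadius ℂ a = 0)
    (hf : constantCoeff (f : ℂ⟦X⟧) ≠ 0) : IsUnit (entireCalculus a f) := by
  set c := constantCoeff (f : ℂ⟦X⟧)
  have hshift := (f : ℂ⟦X⟧).eq_X_mul_shift_add_const
  set g : ℂ⟦X⟧ := PowerSeries.mk fun n => coeff (n + 1) (f : ℂ⟦X⟧)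
  have hg : g ∈ entireSeries ℂ := by
    refine mem_entireSeries_of_X_pow_mul_mem (k := 1) ?_
    rw [pow_one, eq_sub_of_add_eq hshift.symm]
    exact sub_mem f.2 (algebraMap_mem _ c)
  have hf_eq : f = ⟨X, X_mem_entireSeries⟩ * ⟨g, hg⟩ + algebraMap ℂ _ c := Subtype.ext hshift
  have hspec := spectralRadius_mul_eq_zero (commute_entireCalculus a ⟨g, hg⟩) ha
  rw [spectralRadius_eq_zero_iff_spectrum_subset] at hspec
  have hc : -c ∉ spectrum ℂ (a * entireCalculus a ⟨g, hg⟩) := fun h =>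
    hf (neg_eq_zero.1 (hspec h))
  rw [hf_eq, map_add, map_mul, entireCalculus_X, AlgHom.commutes]
  rwa [spectrum.notMem_iff, map_neg, ← neg_add', IsUnit.neg_iff, add_comm] at hc

lemma exists_isUnit_entireCalculus_eq_pow_mul (ha : spectralRadius ℂ a = 0) (hf : f ≠ 0) :
    ∃ (k : ℕ) (u : A), IsUnit u ∧ entireCalculus a f = a ^ k * u := by
  have hfactor := X_pow_order_mul_divXPowOrder (f := (f : ℂ⟦X⟧))
  set k := (f : ℂ⟦X⟧).order.toNat
  let u : entireSeries ℂ := ⟨divXPowOrder (f : ℂ⟦X⟧),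
    mem_entireSeries_of_X_pow_mul_mem (k := k) (hfactor.symm ▸ f.2)⟩
  have hu : constantCoeff (u : ℂ⟦X⟧) ≠ 0 := by
    rwa [Ne, constantCoeff_divXPowOrder_eq_zero_iff, ZeroMemClass.coe_eq_zero]
  have hf_eq : f = ⟨X, X_mem_entireSeries⟩ ^ k * u := Subtype.ext hfactor.symm
  exact ⟨k, entireCalculus a u, isUnit_entireCalculus ha hu, by
    rw [hf_eq, map_mul, map_pow, entireCalculus_X]⟩

end EntireCalculus

section DivisiblePartRank

open Polynomial Cardinal
open Module (AEval')

variable {E : Type*} [NormedAddCommGroup E] [NormedSpace ℂ E] {T : E →L[ℂ] E}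

lemma aeval_coe_continuousLinearMap_apply (p : ℂ[X]) (x : E) :
    aeval (T : E →ₗ[ℂ] E) p x = aeval T p x := by
  simp [aeval_eq_sum_range, LinearMap.sum_apply, Module.End.coe_pow]

variable [CompleteSpace E] [Nontrivial E]

lemma injective_entireCalculus (hinj : Function.Injective T)
    (hT : IsQuasinilpotentOp (T : E →ₗ[ℂ] E)) {f : entireSeries ℂ} (hf : f ≠ 0) :
    Function.Injective (entireCalculus T f) := by
  rw [isQuasinilpotentOp_iff_spectralRadius_eq_zero] at hT
  obtain ⟨k, u, hu, hku⟩ := exists_isUnit_entireCalculus_eq_pow_mul hT hf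
  rw [hku, FunLike.coe_mul_eq_comp, FunLike.coe_pow_eq_iterate]
  exact (hinj.iterate k).comp (ContinuousLinearMap.isUnit_iff_bijective.1 hu).injective

lemma entireCalculus_mem_hyperrange (f : entireSeries ℂ) {v : E}
    (hv : v ∈ hyperrange (T : E →ₗ[ℂ] E)) :
    entireCalculus T f v ∈ hyperrange (T : E →ₗ[ℂ] E) := by
  rw [mem_hyperrange] at hv ⊢
  intro n
  obtain ⟨y, rfl⟩ := hv n
  refine ⟨entireCalculus T f y, ?_⟩
  simpa [Module.End.coe_pow] using
    congrArg (fun S : E →L[ℂ] E => S y) ((commute_entireCalculus T f).pow_left n).eq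

/-- A polynomial, as an everywhere convergent power series. -/
noncomputable def polynomialToEntire : ℂ[X] →ₐ[ℂ] entireSeries ℂ :=
  aeval ⟨PowerSeries.X, X_mem_entireSeries⟩

lemma coe_polynomialToEntire (p : ℂ[X]) : (polynomialToEntire p : PowerSeries ℂ) = p := by
  have h : (entireSeries ℂ).val.comp polynomialToEntire = coeToPowerSeries.algHom ℂ := by
    refine algHom_ext ?_
    simp [polynomialToEntire]
  simpa using DFunLike.congr_fun h p

lemma smul_of_entireCalculus_apply (p : ℂ[X]) (f : entireSeries ℂ) (v : E) :
    p • AEval'.of (T : E →ₗ[ℂ] E) (entireCalculus T f v) =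
      AEval'.of _ (entireCalculus T (polynomialToEntire p * f) v) := by
  rw [← Module.AEval.of_aeval_smul, Module.End.smul_def, aeval_coe_continuousLinearMap_apply,
    map_mul, polynomialToEntire, ← aeval_algHom_apply, entireCalculus_X]
  rfl

lemma linearIndependent_entireCalculus_exponentialSeries (hinj : Function.Injective T)
    (hT : IsQuasinilpotentOp (T : E →ₗ[ℂ] E)) {v : E} (hv : v ≠ 0) :
    LinearIndependent ℂ[X] fun α : ℂ => AEval'.of (T : E →ₗ[ℂ] E)
      (entireCalculus T (exponentialSeries α) v) := by
  rw [linearIndependent_iff']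
  intro s p hsum
  have hexp := linearIndependent_iff'.1 (linearIndependent_rescale_exp (K := ℂ)) s p
  set f : entireSeries ℂ := ∑ α ∈ s, polynomialToEntire (p α) * exponentialSeries α with hf
  have hfv : entireCalculus T f v = 0 := by
    refine (AEval'.of (T : E →ₗ[ℂ] E)).injective ?_
    rw [map_zero, ← hsum, hf, map_sum, sum_apply, map_sum]
    simp only [smul_of_entireCalculus_apply]
  have hf0 : f = 0 := by
    by_contra h
    exact hv (injective_entireCalculus hinj hT h (hfv.trans (map_zero _).symm))
  refine hexp ?_
  simpa [hf, coe_polynomialToEntire, exponentialSeries, Algebra.smul_def,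
    PowerSeries.algebraMap_apply'] using congrArg Subtype.val hf0

theorem continuum_le_rank_divisiblePart (hinj : Function.Injective T)
    (hT : IsQuasinilpotentOp (T : E →ₗ[ℂ] E)) (hne : hyperrange (T : E →ₗ[ℂ] E) ≠ ⊥) :
    𝔠 ≤ Module.rank ℂ[X] (divisiblePart (T : E →ₗ[ℂ] E)) := by
  obtain ⟨v, hv, hv0⟩ := Submodule.exists_mem_ne_zero_of_ne_bot hne
  have hli : LinearIndependent ℂ[X] fun α : ℂ => (⟨_, of_mem_divisiblePart.2
      (entireCalculus_mem_hyperrange (exponentialSeries α) hv)⟩ :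
        divisiblePart (T : E →ₗ[ℂ] E)) :=
    .of_comp (divisiblePart (T : E →ₗ[ℂ] E)).subtype
      (linearIndependent_entireCalculus_exponentialSeries hinj hT hv0)
  simpa only [mk_complex, lift_continuum, lift_uzero] using hli.cardinal_lift_le_rank

end DivisiblePartRank

section Similarity

open Cardinal
open Module (AEval')

lemma mk_le_continuum_of_rank_le {V : Type*} [AddCommGroup V] [Module ℂ V]
    (h : Module.rank ℂ V ≤ 𝔠) : #V ≤ 𝔠 := by
  by_contra! hV
  have hlt : lift #ℂ < lift #V := by rwa [mk_complex, lift_continuum, lift_uzero]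
  exact (Module.Free.rank_eq_mk_of_infinite_lt ℂ V hlt ▸ h).not_gt hV

lemma rank_quotient_le_mk {K V : Type*} [Field K] [AddCommGroup V] [Module K V]
    (W : Submodule K V) : Module.rank K (V ⧸ W) ≤ #V :=
  (rank_le_card K _).trans (mk_le_of_surjective W.mkQ_surjective)

lemma rank_divisiblePart_le_mk {K V : Type*} [Field K] [AddCommGroup V] [Module K V]
    (T : Module.End K V) : Module.rank (Polynomial K) (divisiblePart T) ≤ #V :=
  (rank_le_card _ _).trans ((mk_subtype_le _).trans_eq (mk_congr (AEval'.of T).symm.toEquiv))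

variable {E : Type*} [NormedAddCommGroup E] [NormedSpace ℂ E] [CompleteSpace E] [Nontrivial E]
  {T : Module.End ℂ E}

lemma HasClosedFiniteDescent.hyperrange_ne_bot (hd : HasClosedFiniteDescent T) (hT : Continuous T)
    (hinj : Function.Injective T) : hyperrange T ≠ ⊥ := by
  obtain ⟨m, hm⟩ := hd
  obtain ⟨x, hx⟩ := exists_ne (0 : E)
  intro hbot
  have hmem := range_pow_subset_closure_image_hyperrange hT hm (LinearMap.mem_range_self _ x)
  rw [hbot, Submodule.bot_coe, image_singleton, map_zero, closure_singleton, mem_singleton_iff,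
    Module.End.coe_pow] at hmem
  exact hx (hinj.iterate m (hmem.trans (iterate_map_zero T m).symm))

lemma rank_quotient_range_eq_continuum (hE : #E ≤ 𝔠) (hT : Continuous T)
    (hinj : Function.Injective T) (hq : IsQuasinilpotentOp T) :
    Module.rank ℂ (E ⧸ LinearMap.range T) = 𝔠 :=
  ((rank_quotient_le_mk _).trans hE).antisymm <|
    continuum_le_rank_quotient_range (T := ⟨T, hT⟩) hinj
      (IsQuasinilpotentOp.not_antilipschitzWith (T := ⟨T, hT⟩) hq)

lemma rank_divisiblePart_eq_continuum (hE : #E ≤ 𝔠) (hT : Continuous T)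
    (hinj : Function.Injective T) (hq : IsQuasinilpotentOp T) (hd : HasClosedFiniteDescent T) :
    Module.rank (Polynomial ℂ) (divisiblePart T) = 𝔠 :=
  ((rank_divisiblePart_le_mk T).trans hE).antisymm <|
    continuum_le_rank_divisiblePart (T := ⟨T, hT⟩) hinj hq (hd.hyperrange_ne_bot hT hinj)

theorem exists_linearEquiv_semiconj {F : Type*} [NormedAddCommGroup F] [NormedSpace ℂ F]
    [CompleteSpace F] [Nontrivial F] {S : Module.End ℂ F} (hE : #E ≤ 𝔠) (hF : #F ≤ 𝔠)
    (hT : Continuous T) (hS : Continuous S)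
    (hinjT : Function.Injective T) (hinjS : Function.Injective S)
    (hqT : IsQuasinilpotentOp T) (hqS : IsQuasinilpotentOp S)
    (hdT : HasClosedFiniteDescent T) (hdS : HasClosedFiniteDescent S) :
    ∃ G : E ≃ₗ[ℂ] F, Function.Semiconj G T S := by
  refine exists_linearEquiv_semiconj_of_hasBorelProperty hinjT hinjS (fun _ => hqT.bijective_aeval)
    (fun _ => hqS.bijective_aeval) (hdT.hasBorelProperty hT) (hdS.hasBorelProperty hS) ?_ ?_
  · rw [rank_quotient_range_eq_continuum hE hT hinjT hqT,
      rank_quotient_range_eq_continuum hF hS hinjS hqS, lift_continuum, lift_continuum]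
  · rw [rank_divisiblePart_eq_continuum hE hT hinjT hqT hdT,
      rank_divisiblePart_eq_continuum hF hS hinjS hqS hdS, lift_continuum, lift_continuum]

end Similarity

section Volterra

open Filter
open scoped Nat

lemma spectralRadius_eq_zero_of_norm_pow_le_inv_factorial {A : Type*} [NormedRing A]
    [NormedAlgebra ℂ A] [CompleteSpace A] {a : A} (h : ∀ n : ℕ, ‖a ^ n‖ ≤ (n ! : ℝ)⁻¹) :
    spectralRadius ℂ a = 0 := by
  rw [spectralRadius_eq_zero_iff_eventually_norm_pow_le]
  intro r hr
  filter_upwards [(FloorSemiring.tendsto_pow_div_factorial_atTop r⁻¹).eventually_le_const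
    one_pos] with n hn
  refine (h n).trans ?_
  rwa [inv_pow, div_eq_mul_inv, inv_mul_le_iff₀ (by positivity), mul_one] at hn

lemma volterra_apply (f : C(Set.Icc (0 : ℝ) 1, ℂ)) (x : Set.Icc (0 : ℝ) 1) :
    volterra f x = ∫ t in (0 : ℝ)..x, f (Set.projIcc 0 1 zero_le_one t) := rfl

lemma injective_volterra : Function.Injective volterra := by
  rw [injective_iff_map_eq_zero]
  intro f hf
  have hcont : Continuous fun t => f (Set.projIcc 0 1 zero_le_one t) :=
    f.continuous.comp continuous_projIcc
  have hIoo : EqOn (fun t => f (Set.projIcc 0 1 zero_le_one t)) 0 (Ioo (0 : ℝ) 1) := by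
    intro x hx
    have hderiv := intervalIntegral.integral_hasDerivAt_right (hcont.intervalIntegrable 0 x)
      hcont.stronglyMeasurable.stronglyMeasurableAtFilter hcont.continuousAt
    refine hderiv.unique ((hasDerivAt_const x (0 : ℂ)).congr_of_eventuallyEq ?_)
    filter_upwards [Ioo_mem_nhds hx.1 hx.2] with u hu
    exact DFunLike.congr_fun hf ⟨u, hu.1.le, hu.2.le⟩
  have hIcc := hIoo.closure hcont continuous_const
  rw [closure_Ioo zero_ne_one] at hIcc
  ext x
  simpa using hIcc x.2

lemma norm_volterra_pow_apply_le (f : C(Set.Icc (0 : ℝ) 1, ℂ)) (n : ℕ) (x : Set.Icc (0 : ℝ) 1) :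
    ‖(volterra ^ n) f x‖ ≤ ‖f‖ * ((x : ℝ) ^ n / n !) := by
  induction n generalizing x with
  | zero => simpa using f.norm_coe_le_norm x
  | succ n ih =>
    have hprim : ∫ t in (0 : ℝ)..x, ‖f‖ * (t ^ n / n !) =
        ‖f‖ * ((x : ℝ) ^ (n + 1) / (n + 1)!) := by
      rw [intervalIntegral.integral_const_mul, intervalIntegral.integral_div, integral_pow,
        zero_pow n.succ_ne_zero, sub_zero, div_div, Nat.factorial_succ, Nat.cast_mul,
        Nat.cast_succ]
    rw [pow_succ', Module.End.mul_apply, volterra_apply, ← hprim]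
    refine intervalIntegral.norm_integral_le_of_norm_le x.2.1 (ae_of_all _ fun t ht => ?_)
      (Continuous.intervalIntegrable (by fun_prop) _ _)
    have ht' : t ∈ Set.Icc (0 : ℝ) 1 := ⟨ht.1.le, ht.2.trans x.2.2⟩
    rw [Set.projIcc_of_mem zero_le_one ht']
    exact ih ⟨t, ht'⟩

lemma norm_volterra_pow_le (f : C(Set.Icc (0 : ℝ) 1, ℂ)) (n : ℕ) :
    ‖(volterra ^ n) f‖ ≤ (n ! : ℝ)⁻¹ * ‖f‖ := by
  refine (ContinuousMap.norm_le _ (by positivity)).2 fun x => ?_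
  refine (norm_volterra_pow_apply_le f n x).trans ?_
  rw [mul_comm, ← one_div]
  gcongr
  exact pow_le_one₀ x.2.1 x.2.2

lemma continuous_volterra : Continuous volterra :=
  AddMonoidHomClass.continuous_of_bound volterra 1 fun f => by simpa using norm_volterra_pow_le f 1

lemma isQuasinilpotentOp_volterra : IsQuasinilpotentOp volterra := by
  let V : C(Set.Icc (0 : ℝ) 1, ℂ) →L[ℂ] C(Set.Icc (0 : ℝ) 1, ℂ) := ⟨volterra, continuous_volterra⟩
  refine (isQuasinilpotentOp_iff_spectralRadius_eq_zero (T := V)).2 ?_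
  refine spectralRadius_eq_zero_of_norm_pow_le_inv_factorial fun n => ?_
  refine ContinuousLinearMap.opNorm_le_bound _ (by positivity) fun f => ?_
  have hpow : (V ^ n) f = (volterra ^ n) f := by
    rw [FunLike.coe_pow_eq_iterate, Module.End.coe_pow]
    rfl
  exact hpow ▸ norm_volterra_pow_le f n

lemma topologicalClosure_span_range_pow_eq_top {𝕜 Y : Type*} [RCLike 𝕜] [TopologicalSpace Y]
    [CompactSpace Y] {f : C(Y, 𝕜)} (hf : IsSelfAdjoint f) (hinj : Function.Injective f) :
    (Submodule.span 𝕜 (range fun n : ℕ => f ^ n)).topologicalClosure = ⊤ := by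
  have hsep : (StarAlgebra.adjoin 𝕜 {f}).SeparatesPoints := fun x y hxy =>
    ⟨f, ⟨f, StarAlgebra.self_mem_adjoin_singleton 𝕜 f, rfl⟩, hinj.ne hxy⟩
  have htop := ContinuousMap.starSubalgebra_topologicalClosure_eq_top_of_separatesPoints _ hsep
  have hspan : (Submodule.span 𝕜 (range fun n : ℕ => f ^ n) : Set C(Y, 𝕜)) =
      StarAlgebra.adjoin 𝕜 {f} := by
    rw [← StarSubalgebra.coe_toSubalgebra, StarAlgebra.adjoin_toSubalgebra, star_singleton,
      hf.star_eq, union_self, ← Subalgebra.coe_toSubmodule, Algebra.adjoin_eq_span,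
      ← Submonoid.powers_eq_closure]
    rfl
  refine SetLike.coe_injective ?_
  rw [Submodule.topologicalClosure_coe, hspan, ← StarSubalgebra.topologicalClosure_coe, htop]
  rfl

/-- The function `x ↦ 1 - x` on `[0,1]`. The powers of `1 - x`, unlike those of `x`, are
well suited to `volterra`, whose range consists of functions vanishing at `0`. -/
noncomputable def reflection : C(Set.Icc (0 : ℝ) 1, ℂ) :=
  ⟨fun x => ((1 - x : ℝ) : ℂ), by fun_prop⟩

lemma isSelfAdjoint_reflection : IsSelfAdjoint reflection := by
  ext x
  exact Complex.conj_ofReal _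

lemma injective_reflection : Function.Injective reflection := fun x y h => by
  simpa [reflection, Subtype.ext_iff] using h

lemma norm_reflection_le : ‖reflection‖ ≤ 1 := by
  refine (ContinuousMap.norm_le _ zero_le_one).2 fun x => ?_
  rw [reflection, ContinuousMap.coe_mk, Complex.norm_real,
    Real.norm_of_nonneg (sub_nonneg.2 x.2.2)]
  exact sub_le_self 1 x.2.1

lemma norm_reflection_pow_le (n : ℕ) : ‖reflection ^ n‖ ≤ 1 :=
  (norm_pow_le _ n).trans (pow_le_one₀ (norm_nonneg _) norm_reflection_le)

lemma volterra_reflection_pow (n : ℕ) :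
    volterra (reflection ^ n) = ((n : ℂ) + 1)⁻¹ • (1 - reflection ^ (n + 1)) := by
  ext x
  have hcongr : EqOn (fun t => (reflection ^ n) (Set.projIcc 0 1 zero_le_one t))
      (fun t => (((1 - t) ^ n : ℝ) : ℂ)) (uIcc (0 : ℝ) x) := by
    intro t ht
    rw [uIcc_of_le x.2.1] at ht
    simp [Set.projIcc_of_mem zero_le_one ⟨ht.1, ht.2.trans x.2.2⟩, reflection]
  rw [volterra_apply, intervalIntegral.integral_congr hcongr, intervalIntegral.integral_ofReal,
    intervalIntegral.integral_comp_sub_left (fun t => t ^ n), integral_pow]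
  simp [reflection, div_eq_inv_mul]

lemma tendsto_volterra_reflection_pow :
    Tendsto (fun n : ℕ => volterra (reflection ^ n)) atTop (nhds 0) := by
  simp only [volterra_reflection_pow]
  have hcoeff : Tendsto (fun n : ℕ => ((n : ℂ) + 1)⁻¹) atTop (nhds 0) := by
    simpa only [one_div] using tendsto_one_div_add_atTop_nhds_zero_nat (𝕜 := ℂ)
  have hbound (n : ℕ) : ‖1 - reflection ^ (n + 1)‖ ≤ 1 + 1 :=
    norm_sub_le_of_le norm_one.le (norm_reflection_pow_le (n + 1))
  exact NormedField.tendsto_zero_smul_of_tendsto_zero_of_bounded hcoeff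
    (isBoundedUnder_of ⟨1 + 1, hbound⟩)

lemma volterra_one_sub_reflection_pow_mem_range (n : ℕ) :
    volterra (1 - reflection ^ (n + 1)) ∈ LinearMap.range (volterra ^ 2) := by
  refine ⟨((n : ℂ) + 1) • reflection ^ n, ?_⟩
  rw [pow_two, Module.End.mul_apply, map_smul, volterra_reflection_pow,
    smul_inv_smul₀ (Nat.cast_add_one_ne_zero n)]

lemma volterra_reflection_pow_mem_topologicalClosure (n : ℕ) :
    volterra (reflection ^ n) ∈ (LinearMap.range (volterra ^ 2)).topologicalClosure := by
  have hone : volterra 1 ∈ (LinearMap.range (volterra ^ 2)).topologicalClosure := by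
    have hlim := ((tendsto_add_atTop_iff_nat 1).2 tendsto_volterra_reflection_pow).const_sub
      (volterra 1)
    simp only [← map_sub, sub_zero] at hlim
    exact mem_closure_of_tendsto hlim
      (Eventually.of_forall volterra_one_sub_reflection_pow_mem_range)
  rcases n with _ | n
  · rwa [pow_zero]
  · rw [← sub_sub_cancel 1 (reflection ^ (n + 1)), map_sub]
    exact sub_mem hone
      (Submodule.le_topologicalClosure _ (volterra_one_sub_reflection_pow_mem_range n))

lemma hasClosedFiniteDescent_volterra : HasClosedFiniteDescent volterra := by
  have hmem (f : C(Set.Icc (0 : ℝ) 1, ℂ)) :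
      volterra f ∈ (LinearMap.range (volterra ^ 2)).topologicalClosure := by
    have hle := Submodule.topologicalClosure_minimal
      (t := (LinearMap.range (volterra ^ 2)).topologicalClosure.comap volterra) _
      (Submodule.span_le.2 (range_subset_iff.2 volterra_reflection_pow_mem_topologicalClosure))
      ((Submodule.isClosed_topologicalClosure _).preimage continuous_volterra)
    rw [topologicalClosure_span_range_pow_eq_top isSelfAdjoint_reflection
      injective_reflection] at hle
    exact hle Submodule.mem_top
  refine ⟨1, (closure_minimal ?_ isClosed_closure).antisymm (closure_mono ?_)⟩
  · rintro _ ⟨f, rfl⟩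
    rw [pow_one]
    exact hmem f
  · rintro _ ⟨f, rfl⟩
    exact ⟨volterra f, by rw [pow_succ _ 1, Module.End.mul_apply]⟩

open Cardinal in
lemma mk_continuousMap_le_continuum.{u, v} {Y : Type u} {Z : Type v} [TopologicalSpace Y]
    [TopologicalSpace.SeparableSpace Y] [TopologicalSpace Z] [T2Space Z] (hZ : #Z ≤ 𝔠) :
    #C(Y, Z) ≤ 𝔠 := by
  obtain ⟨s, hs, hdense⟩ := TopologicalSpace.exists_countable_dense Y
  have hinj : Function.Injective fun (f : C(Y, Z)) (x : s) => f x := fun f g h =>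
    DFunLike.coe_injective (f.continuous.ext_on hdense g.continuous fun x hx => congrFun h ⟨x, hx⟩)
  calc #C(Y, Z) ≤ #(s → Z) := mk_le_of_injective hinj
    _ = lift.{u} #Z ^ lift.{v} #s := mk_arrow _ _
    _ ≤ 𝔠 ^ lift.{v} #s := power_le_power_right (lift_le_continuum.2 hZ)
    _ ≤ 𝔠 ^ ℵ₀ := power_le_power_left continuum_ne_zero (lift_le_aleph0.2 hs.le_aleph0)
    _ = 𝔠 := continuum_power_aleph0

end Volterra

/-- Theorem 1.2: a bounded linear operator `T` on a complex Banach space of algebraic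
dimension continuum is algebraically similar to the Volterra operator on `C[0,1]` if and
only if `T` is injective, quasinilpotent and has closed finite descent. -/
theorem similar_to_volterra_iff
    {X : Type*} [NormedAddCommGroup X] [NormedSpace ℂ X] [CompleteSpace X]
    (hdim : Module.rank ℂ X = Cardinal.continuum)
    (T : X →ₗ[ℂ] X) (hT : Continuous T) :
    (∃ G : X ≃ₗ[ℂ] C(Set.Icc (0:ℝ) 1, ℂ), ∀ x : X, G (T x) = volterra (G x)) ↔
    (Function.Injective T ∧ IsQuasinilpotentOp T ∧
      ∃ m : ℕ, closure ((LinearMap.range (T ^ m) : Submodule ℂ X) : Set X) =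
        closure ((LinearMap.range (T ^ (m + 1)) : Submodule ℂ X) : Set X)) := by
  have : Nontrivial X := by
    rw [← rank_pos_iff_nontrivial (R := ℂ), hdim]
    exact Cardinal.continuum_pos
  constructor
  · rintro ⟨G, hG⟩
    have hborel : HasBorelProperty volterra :=
      hasClosedFiniteDescent_volterra.hasBorelProperty continuous_volterra
    refine ⟨fun x y hxy => G.injective (injective_volterra ?_),
      isQuasinilpotentOp_volterra.of_semiconj G hG,
      (hasBorelProperty_iff_hasClosedFiniteDescent hT).1 (hborel.of_semiconj G hG)⟩
    rw [← hG, ← hG, hxy]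
  · rintro ⟨hinj, hquasi, hdescent⟩
    exact exists_linearEquiv_semiconj (mk_le_continuum_of_rank_le hdim.le)
      (mk_continuousMap_le_continuum Cardinal.mk_complex.le) hT continuous_volterra
      hinj injective_volterra hquasi isQuasinilpotentOp_volterra hdescent
      hasClosedFiniteDescent_volterra
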